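/- arXiv:1612.04213 — 3 statements merged into one kernel-verified Lean document; each statement's English description precedes it below -/
import Mathlib

section
/- Let $l_0 > 0$ and let $(l_n)_{n\ge 1}$ be a strictly increasing sequence of positive real numbers with $l_n \to \infty$. For each $n \ge 1$ define $a_n = \operatorname{arcosh}\big((\cosh l_n + \cosh l_n \cosh l_0)/(\sinh l_n \sinh l_0)\big)$, $b_n = \operatorname{arcosh}\big((\cosh l_0 + \cosh^2 l_n)/\sinh^2 l_n\big)$, $c_n = \operatorname{arsinh}(\sinh a_n \cdot \cosh l_0)$, and $d_n = \operatorname{arsinh}(\sinh b_n \cdot \cosh l_n)$. Then there exists a constant $M > 0$ such that $a_n \le M$, $b_n \le M$, $c_n \le M$ and $d_n \le M$ for all $n \ge 1$. -/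
open Real Filter

/-- `arcosh x = log (x + √(x² - 1))`, the inverse of `cosh` on `[1, ∞)`. -/
noncomputable def arcosh (x : ℝ) : ℝ := Real.log (x + Real.sqrt (x ^ 2 - 1))

/-- the four vertex-to-side distances in the right-angled hexagons with
pairwise non-adjacent side lengths `l 0, l n, l n` are uniformly bounded. -/
theorem stmt_0 (l : ℕ → ℝ) (hl0 : 0 < l 0)
    (hpos : ∀ n, 1 ≤ n → 0 < l n)
    (hmono : ∀ m n, 1 ≤ m → m < n → l m < l n)
    (htend : Tendsto l atTop atTop)
    (a b c d : ℕ → ℝ)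
    (ha : ∀ n, 1 ≤ n → a n =
      _root_.arcosh ((Real.cosh (l n) + Real.cosh (l n) * Real.cosh (l 0)) /
        (Real.sinh (l n) * Real.sinh (l 0))))
    (hb : ∀ n, 1 ≤ n → b n =
      _root_.arcosh ((Real.cosh (l 0) + Real.cosh (l n) ^ 2) / Real.sinh (l n) ^ 2))
    (hc : ∀ n, 1 ≤ n → c n = Real.arsinh (Real.sinh (a n) * Real.cosh (l 0)))
    (hd : ∀ n, 1 ≤ n → d n = Real.arsinh (Real.sinh (b n) * Real.cosh (l n))) :
    ∃ M : ℝ, 0 < M ∧ ∀ n, 1 ≤ n → a n ≤ M ∧ b n ≤ M ∧ c n ≤ M ∧ d n ≤ M := by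
  have harc : ∀ x, _root_.arcosh x = Real.arcosh x := fun x => rfl
  have hS0 : 0 < Real.sinh (l 0) := Real.sinh_pos_iff.mpr hl0
  have hC0 : 1 ≤ Real.cosh (l 0) := Real.one_le_cosh _
  have hCS0 : Real.sinh (l 0) ≤ Real.cosh (l 0) := (Real.sinh_lt_cosh _).le
  simp only [harc] at ha hb
  obtain ⟨s, hs, hsl⟩ : ∃ s : ℝ, 0 < s ∧ ∀ n, 1 ≤ n → s ≤ Real.sinh (l n) := by
    refine ⟨Real.sinh (l 1), Real.sinh_pos_iff.mpr (hpos 1 le_rfl), fun n hn => ?_⟩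
    rcases hn.eq_or_lt with h | h
    · rw [← h]
    · exact Real.sinh_le_sinh.mpr (hmono 1 n le_rfl h).le
  set C0 := Real.cosh (l 0)
  set S0 := Real.sinh (l 0)
  obtain ⟨K, hK⟩ : ∃ K : ℝ, K = 1 + 1 / s := ⟨_, rfl⟩
  have hK1 : 1 ≤ K := by rw [hK]; have : 0 < 1 / s := by positivity
                         linarith
  have hKs : K * s = s + 1 := by rw [hK]; field_simp
  obtain ⟨A, hA⟩ : ∃ A : ℝ, A = K * (1 + C0) / S0 := ⟨_, rfl⟩
  obtain ⟨B, hB⟩ : ∃ B : ℝ, B = 1 + (C0 + 1) / s ^ 2 := ⟨_, rfl⟩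
  have hA1 : 1 ≤ A := by
    rw [hA, le_div_iff₀ hS0]
    have := mul_le_mul_of_nonneg_right hK1 (show 0 ≤ 1 + C0 by linarith)
    linarith
  have hB1 : 1 ≤ B := by
    rw [hB]; have : 0 < (C0 + 1) / s ^ 2 := by positivity
    linarith
  obtain ⟨D, hD⟩ : ∃ D : ℝ, D = Real.sqrt ((C0 + 1) * K ^ 2 * (B + 1)) := ⟨_, rfl⟩
  have h1 := Real.arcosh_nonneg hA1
  have h2 := Real.arcosh_nonneg hB1
  have h3 : 0 ≤ Real.arsinh (A * C0) := Real.arsinh_nonneg_iff.mpr (by positivity)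
  have h4 : 0 ≤ Real.arsinh D := Real.arsinh_nonneg_iff.mpr (by rw [hD]; positivity)
  refine ⟨Real.arcosh A + Real.arcosh B + Real.arsinh (A * C0) + Real.arsinh D + 1,
    by linarith, fun n hn => ?_⟩
  have hSs := hsl n hn
  have han := ha n hn
  have hbn := hb n hn
  have hcn := hc n hn
  have hdn := hd n hn
  have hCS : Real.sinh (l n) ≤ Real.cosh (l n) := (Real.sinh_lt_cosh _).le
  have hC1 : 1 ≤ Real.cosh (l n) := Real.one_le_cosh _
  have hsq := Real.cosh_sq (l n)
  set C := Real.cosh (l n)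
  set S := Real.sinh (l n)
  have hS : 0 < S := lt_of_lt_of_le hs hSs
  have hCK : C ≤ K * S := by
    have e1 : C ≤ 1 + S := by
      refine (sq_le_sq₀ (by linarith) (by linarith)).mp ?_
      rw [hsq]; linarith [show (1 + S) ^ 2 = 1 + 2 * S + S ^ 2 by ring]
    have e2 : 1 ≤ (K - 1) * S := by
      have := mul_le_mul_of_nonneg_left hSs (sub_nonneg.mpr hK1)
      linarith
    linarith
  obtain ⟨X, hX⟩ : ∃ X : ℝ, X = (C + C * C0) / (S * S0) := ⟨_, rfl⟩
  obtain ⟨Y, hY⟩ : ∃ Y : ℝ, Y = (C0 + C ^ 2) / S ^ 2 := ⟨_, rfl⟩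
  have hX1 : 1 ≤ X := by
    rw [hX, le_div_iff₀ (by positivity)]
    have : S * S0 ≤ C * (1 + C0) :=
      mul_le_mul hCS (by linarith) hS0.le (by linarith)
    linarith
  have hXA : X ≤ A := by
    rw [hX, hA, div_le_div_iff₀ (by positivity) hS0]
    have : 0 ≤ (K * S - C) * ((1 + C0) * S0) :=
      mul_nonneg (by linarith) (by positivity)
    linarith
  have hY' : Y = 1 + (C0 + 1) / S ^ 2 := by
    rw [hY, hsq]; field_simp; ring
  have hY1 : 1 ≤ Y := by
    rw [hY']; have : 0 < (C0 + 1) / S ^ 2 := by positivity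
    linarith
  have hYB : Y ≤ B := by
    rw [hY', hB]; gcongr
  rw [← hX] at han
  rw [← hY] at hbn
  have ia : a n ≤ Real.arcosh A := by
    rw [han]; exact (Real.arcosh_le_arcosh (by linarith) (by linarith)).mpr hXA
  have ib : b n ≤ Real.arcosh B := by
    rw [hbn]; exact (Real.arcosh_le_arcosh (by linarith) (by linarith)).mpr hYB
  have ic : c n ≤ Real.arsinh (A * C0) := by
    rw [hcn, han, Real.sinh_arcosh hX1]
    apply Real.arsinh_le_arsinh.mpr
    have : Real.sqrt (X ^ 2 - 1) ≤ A := by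
      apply Real.sqrt_le_iff.mpr
      constructor
      · linarith
      · have : X ^ 2 ≤ A ^ 2 := pow_le_pow_left₀ (by linarith) hXA 2
        linarith
    gcongr
  have id : d n ≤ Real.arsinh D := by
    rw [hdn, hbn, Real.sinh_arcosh hY1]
    apply Real.arsinh_le_arsinh.mpr
    rw [hD]
    apply Real.le_sqrt_of_sq_le
    rw [mul_pow, Real.sq_sqrt (by have := one_le_pow₀ (n := 2) hY1; linarith)]
    have e1 : (Y - 1) * S ^ 2 = C0 + 1 := by rw [hY']; field_simp; ring
    have e2 : C ^ 2 ≤ K ^ 2 * S ^ 2 := by rw [← mul_pow]; gcongr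
    calc (Y ^ 2 - 1) * C ^ 2 = ((Y - 1) * (Y + 1)) * C ^ 2 := by ring
      _ ≤ ((Y - 1) * (Y + 1)) * (K ^ 2 * S ^ 2) := by
          apply mul_le_mul_of_nonneg_left e2
          exact mul_nonneg (by linarith) (by linarith)
      _ = ((Y - 1) * S ^ 2) * K ^ 2 * (Y + 1) := by ring
      _ = (C0 + 1) * K ^ 2 * (Y + 1) := by rw [e1]
      _ ≤ _ := by gcongr
  refine ⟨?_, ?_, ?_, ?_⟩ <;> linarith
end

section
/- Let $(l_i)_{i \ge 0}$ be a sequence of positive real numbers, and for each $i \ge 0$ set $d_i = \operatorname{arcosh}\Big(\dfrac{1 + \cosh(l_i/2)\cosh(l_{i+1}/2)}{\sinh(l_i/2)\sinh(l_{i+1}/2)}\Big)$. If the series $\sum_{i=0}^{\infty} d_i$ converges, then $l_i \to \infty$ as $i \to \infty$. -/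
open Real Filter

/-- if the distances between successive geodesics in a tight flute
surface are summable, then the boundary lengths tend to infinity. -/
theorem stmt_3 (l : ℕ → ℝ) (hl : ∀ i, 0 < l i) (d : ℕ → ℝ)
    (hd : ∀ i, d i =
      _root_.arcosh ((1 + Real.cosh (l i / 2) * Real.cosh (l (i + 1) / 2)) /
        (Real.sinh (l i / 2) * Real.sinh (l (i + 1) / 2))))
    (hsum : Summable d) :
    Tendsto l atTop atTop := by
  have hd0 := hsum.tendsto_atTop_zero
  have key : ∀ i, Real.exp (-l i) ≤ Real.exp (d i) - 1 := by
    intro i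
    have ha : 0 < Real.sinh (l i / 2) := Real.sinh_pos_iff.2 (half_pos (hl i))
    have hb : 0 < Real.sinh (l (i + 1) / 2) := Real.sinh_pos_iff.2 (half_pos (hl (i + 1)))
    have h1 : 1 + Real.exp (-l i) ≤ (1 + Real.cosh (l i / 2) * Real.cosh (l (i + 1) / 2)) /
        (Real.sinh (l i / 2) * Real.sinh (l (i + 1) / 2)) := by
      rw [le_div_iff₀ (mul_pos ha hb)]
      have hE : Real.exp (-l i) = Real.exp (-(l i / 2)) * Real.exp (-(l i / 2)) := by
        rw [← Real.exp_add]; congr 1; ring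
      have hc : Real.cosh (l i / 2) = Real.sinh (l i / 2) + Real.exp (-(l i / 2)) := by
        rw [← Real.cosh_sub_sinh]; ring
      have hs : Real.exp (-(l i / 2)) * Real.sinh (l i / 2) ≤ 1 := by
        have e1 : Real.exp (-(l i / 2)) * Real.exp (l i / 2) = 1 := by
          rw [← Real.exp_add]; simp
        have e2 := Real.cosh_add_sinh (l i / 2)
        have e3 := Real.cosh_pos (l i / 2)
        have e4 := Real.exp_pos (-(l i / 2))
        nlinarith [mul_pos e4 e3]
      have hcb : Real.sinh (l (i + 1) / 2) < Real.cosh (l (i + 1) / 2) := Real.sinh_lt_cosh _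
      have e4 := Real.exp_pos (-(l i / 2))
      have p1 := mul_le_mul_of_nonneg_right hs (mul_pos e4 hb).le
      have p2 := mul_lt_mul_of_pos_left hcb (Real.cosh_pos (l i / 2))
      have p3 : Real.cosh (l i / 2) * Real.sinh (l (i + 1) / 2) =
        Real.sinh (l i / 2) * Real.sinh (l (i + 1) / 2)
          + Real.exp (-(l i / 2)) * Real.sinh (l (i + 1) / 2) := by rw [hc]; ring
      rw [hE]
      linarith
    have hE := Real.exp_pos (-l i)
    rw [hd i]
    set X := (1 + Real.cosh (l i / 2) * Real.cosh (l (i + 1) / 2)) /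
        (Real.sinh (l i / 2) * Real.sinh (l (i + 1) / 2))
    have hsq := Real.sqrt_nonneg (X ^ 2 - 1)
    unfold _root_.arcosh
    rw [Real.exp_log (by linarith)]
    linarith
  have hlim : Tendsto (fun i => Real.exp (d i) - 1) atTop (nhds 0) := by
    have := ((Real.continuous_exp.tendsto 0).comp hd0).sub_const 1
    simpa using this
  have h0 : Tendsto (fun i => Real.exp (-l i)) atTop (nhds 0) :=
    squeeze_zero (fun i => (Real.exp_pos _).le) key hlim
  have := Real.tendsto_exp_comp_nhds_zero.1 h0
  exact tendsto_neg_atBot_iff.1 this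
end

section
/- Let $l_0 > 0$ and let $(\beta_n)_{n \ge 0}$ be a strictly increasing sequence of positive real numbers. For each $n$ define $a_n = \operatorname{arcosh}\big((\cosh l_0 + \cosh \beta_n \cosh l_0)/(\sinh \beta_n \sinh l_0)\big)$ and $c_n = \operatorname{arsinh}(\sinh a_n \cdot \cosh l_0)$. Then there exists a constant $L > 0$ such that $a_n \le L$ and $c_n \le L$ for all $n \ge 0$. -/
open Real

/-- uniform bound on the vertex-to-side distances in right-angled
hexagons with pairwise non-adjacent side lengths `β n, l0, l0`. -/
theorem stmt_8 (l0 : ℝ) (hl0 : 0 < l0) (β : ℕ → ℝ)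
    (hβpos : ∀ n, 0 < β n) (hβmono : StrictMono β)
    (a c : ℕ → ℝ)
    (ha : ∀ n, a n =
      _root_.arcosh ((Real.cosh l0 + Real.cosh (β n) * Real.cosh l0) /
        (Real.sinh (β n) * Real.sinh l0)))
    (hc : ∀ n, c n = Real.arsinh (Real.sinh (a n) * Real.cosh l0)) :
    ∃ L : ℝ, 0 < L ∧ ∀ n, a n ≤ L ∧ c n ≤ L := by
  have key : ∀ n, a n ≤ a 0 := by
    intro n
    rw [ha n, ha 0]
    have h0 : β 0 ≤ β n := hβmono.monotone (Nat.zero_le n)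
    have hS0 : 0 < Real.sinh (β 0) := Real.sinh_pos_iff.2 (hβpos 0)
    have hS : 0 < Real.sinh (β n) := Real.sinh_pos_iff.2 (hβpos n)
    have hl : 0 < Real.sinh l0 := Real.sinh_pos_iff.2 hl0
    have hC : 0 < Real.cosh (β n) := Real.cosh_pos _
    have hcl : 0 < Real.cosh l0 := Real.cosh_pos _
    have hSS : Real.sinh (β 0) ≤ Real.sinh (β n) := Real.sinh_le_sinh.2 h0
    have hd : 0 ≤ Real.sinh (β n - β 0) := Real.sinh_nonneg_iff.2 (by linarith)
    rw [Real.sinh_sub] at hd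
    have hpos : 0 < (Real.cosh l0 + Real.cosh (β n) * Real.cosh l0) /
        (Real.sinh (β n) * Real.sinh l0) := by positivity
    have hle : (Real.cosh l0 + Real.cosh (β n) * Real.cosh l0) /
        (Real.sinh (β n) * Real.sinh l0) ≤ (Real.cosh l0 + Real.cosh (β 0) * Real.cosh l0) /
        (Real.sinh (β 0) * Real.sinh l0) := by
      rw [div_le_div_iff₀ (by positivity) (by positivity)]
      have h1 : (1 + Real.cosh (β n)) * Real.sinh (β 0) ≤
          (1 + Real.cosh (β 0)) * Real.sinh (β n) := by linarith
      have h2 := mul_le_mul_of_nonneg_left h1 (mul_pos hcl hl).le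
      linarith
    unfold _root_.arcosh
    apply Real.log_le_log (by positivity)
    gcongr
  refine ⟨max (max (a 0) (c 0)) 1, by positivity, fun n => ⟨?_, ?_⟩⟩
  · exact (key n).trans ((le_max_left _ _).trans (le_max_left _ _))
  · have : c n ≤ c 0 := by
      rw [hc n, hc 0, Real.arsinh_le_arsinh]
      exact mul_le_mul_of_nonneg_right (Real.sinh_le_sinh.2 (key n)) (Real.cosh_pos _).le
    exact this.trans ((le_max_right _ _).trans (le_max_left _ _))
end
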